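/- arXiv:2002.11292 — 3 statements merged into one kernel-verified Lean document; each statement's English description precedes it below -/
import Mathlib

section
/- With the notation of the context, C^{BR_U}_*(X;ℤ) = (C^{BR_U}_n(X;ℤ), ∂^{BR_U}_n)_{n∈ℤ} is a chain complex; that is, ∂^{BR_U}_{n−1} ∘ ∂^{BR_U}_n = 0 for every integer n. -/
open FreeAbelianGroup
open scoped TensorProduct

namespace GAlex

variable {G M A : Type*} [Group G] [AddCommGroup M] [DistribMulAction Gᵐᵒᵖ M] [AddCommGroup A]

/-- The right action `m · g` of a group element `g : G` on `m : M`
(coming from the right `ℤ[G]`-module structure on `M`). -/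
def ract (m : M) (g : G) : M := MulOpposite.op g • m

variable (φ : G →* G)

/-- The operation `(m,g) ⊳ (n,h) = (mh + n(φ(h) − h), h⁻¹gh)` of the `G`-Alexander biquandle. -/
def under (x y : M × G) : M × G :=
  (ract x.1 y.2 + ract y.1 (φ y.2) - ract y.1 y.2, y.2⁻¹ * x.2 * y.2)

/-- The operation `(m,g) ⊚ (n,h) = (mφ(h), g)` of the `G`-Alexander biquandle. -/
def overOp (x y : M × G) : M × G := (ract x.1 (φ y.2), x.2)

/-- The face `g_{⟨p⟩}` (delete the `p`-th entry). -/
def dGdel (n : ℕ) (p : Fin (n + 1)) (g : Fin (n + 1) → G) : Fin n → G :=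
  fun j => g (p.succAbove j)

/-- The face `g_{⟨⊲p⟩}` (conjugate the first entries by `g p` and delete the `p`-th entry). -/
def dGconj (n : ℕ) (p : Fin (n + 1)) (g : Fin (n + 1) → G) : Fin n → G :=
  fun j => if (j : ℕ) < (p : ℕ) then (g p)⁻¹ * g j.castSucc * g p else g j.succ

/-- The face `m_{⟨p⟩}` (merge the two entries adjacent to position `p`;
for `p = 0` drop the first entry). -/
def dMmer (n : ℕ) (p : Fin (n + 1)) (m : Fin (n + 1) → M) : Fin n → M :=
  fun j =>
    if (j : ℕ) + 1 < (p : ℕ) then m j.castSucc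
    else if (j : ℕ) + 1 = (p : ℕ) then m j.castSucc + m j.succ
    else m j.succ

/-- The face `m_{⟨⊲p⟩}`. -/
def dMconj (n : ℕ) (p : Fin (n + 1)) (g : Fin (n + 1) → G) (m : Fin (n + 1) → M) : Fin n → M :=
  fun j =>
    if (j : ℕ) + 1 < (p : ℕ) then ract (m j.castSucc) (g p)
    else if (j : ℕ) + 1 = (p : ℕ) then ract (m j.castSucc) (g p) + ract (m j.succ) (φ (g p))
    else ract (m j.succ) (φ (g p))

/-- The boundary map `∂^{BR_U}_{n+1} : C^{BR_U}_{n+1}(X;ℤ) → C^{BR_U}_n(X;ℤ)`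
(the boundary `∂^{BR_U}_k` is `0` for `k ≤ 1`, which agrees with this formula at `n = 0`). -/
def dBRU (n : ℕ) :
    FreeAbelianGroup ((Fin (n + 1) → G) × (Fin (n + 1) → M)) →+
      FreeAbelianGroup ((Fin n → G) × (Fin n → M)) :=
  FreeAbelianGroup.lift fun x =>
    ∑ p : Fin (n + 1),
      (-1 : ℤ) ^ (p : ℕ) •
        (FreeAbelianGroup.of (dGdel n p x.1, dMmer n p x.2) -
          FreeAbelianGroup.of (dGconj n p x.1, dMconj φ n p x.1 x.2))

/-- The birack boundary map `∂^{BR}_{n+1} : C^{BR}_{n+1}(X;ℤ) → C^{BR}_n(X;ℤ)`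
for the `G`-Alexander biquandle `X = M × G` (with trivial `X`-set). -/
def dBR (n : ℕ) :
    FreeAbelianGroup (Fin (n + 1) → M × G) →+ FreeAbelianGroup (Fin n → M × G) :=
  FreeAbelianGroup.lift fun x =>
    ∑ p : Fin (n + 1),
      (-1 : ℤ) ^ (p : ℕ) •
        (FreeAbelianGroup.of (fun j => x (p.succAbove j)) -
          FreeAbelianGroup.of (fun j : Fin n =>
            if (j : ℕ) < (p : ℕ) then under φ (x j.castSucc) (x p)
            else overOp φ (x j.succ) (x p)))

/-- `γ_n((m₁,g₁),…,(m_n,g_n)) = (g₁,…,g_n; m₁−m₂, …, m_{n−1}−m_n, m_n)`. -/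
def gammaMap (n : ℕ) :
    FreeAbelianGroup (Fin n → M × G) →+ FreeAbelianGroup ((Fin n → G) × (Fin n → M)) :=
  FreeAbelianGroup.lift fun x =>
    FreeAbelianGroup.of
      (fun j => (x j).2,
       fun j => (x j).1 - if h : (j : ℕ) + 1 < n then (x ⟨(j : ℕ) + 1, h⟩).1 else 0)

/-- `r_n(g₁,…,g_n; m₁,…,m_n) = ((m₁+⋯+m_n, g₁), (m₂+⋯+m_n, g₂), …, (m_n, g_n))`. -/
def rMap (n : ℕ) :
    FreeAbelianGroup ((Fin n → G) × (Fin n → M)) →+ FreeAbelianGroup (Fin n → M × G) :=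
  FreeAbelianGroup.lift fun p =>
    FreeAbelianGroup.of fun j => ((∑ i ∈ Finset.Ici j, p.2 i), p.1 j)

/-- The boundary map `∂^{BR_U}_{d+1}` of `C^{BR_U}_*(X;ℤ)_X` (the version with `X`-set `X`,
whose degree-`d` chain group is free on `(1+d)`-tuples); it is `0` in degrees `≤ 1`. -/
def dBRUX : (d : ℕ) →
    FreeAbelianGroup ((Fin (d + 2) → G) × (Fin (d + 2) → M)) →+
      FreeAbelianGroup ((Fin (d + 1) → G) × (Fin (d + 1) → M))
  | 0 => 0
  | d + 1 =>
    FreeAbelianGroup.lift fun x =>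
      ∑ i : Fin (d + 2),
        (-1 : ℤ) ^ (i : ℕ) •
          (FreeAbelianGroup.of (dGdel (d + 2) i.succ x.1, dMmer (d + 2) i.succ x.2) -
            FreeAbelianGroup.of (dGconj (d + 2) i.succ x.1, dMconj φ (d + 2) i.succ x.1 x.2))

/-- The boundary map `∂^{BR}_{d+1}` of `C^{BR}_*(X;ℤ)_X` (the version with `X`-set `X`);
it is `0` in degrees `≤ 1`. -/
def dBRX : (d : ℕ) →
    FreeAbelianGroup (Fin (d + 2) → M × G) →+ FreeAbelianGroup (Fin (d + 1) → M × G)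
  | 0 => 0
  | d + 1 =>
    FreeAbelianGroup.lift fun x =>
      ∑ i : Fin (d + 2),
        (-1 : ℤ) ^ (i : ℕ) •
          (FreeAbelianGroup.of (fun j => x (i.succ.succAbove j)) -
            FreeAbelianGroup.of (fun j : Fin (d + 2) =>
              if (j : ℕ) < (i : ℕ) + 1 then under φ (x j.castSucc) (x i.succ)
              else overOp φ (x j.succ) (x i.succ)))


theorem ract_ract (m : M) (g h : G) : ract (ract m g) h = ract m (g * h) := by
  simp [ract, mul_smul]

theorem ract_add (m m' : M) (g : G) : ract (m + m') g = ract m g + ract m' g := by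
  simp [ract]

theorem dGdel_apply (n : ℕ) (p : Fin (n + 1)) (g : Fin (n + 1) → G) (j : Fin n) :
    dGdel n p g j = if (j : ℕ) < (p : ℕ) then g j.castSucc else g j.succ := by
  simp only [dGdel, Fin.succAbove, Fin.lt_def, Fin.val_castSucc]
  split_ifs <;> rfl

/-- The faces. -/
def face (n : ℕ) (b : Bool) (p : Fin (n + 1)) (x : (Fin (n + 1) → G) × (Fin (n + 1) → M)) :
    (Fin n → G) × (Fin n → M) :=
  if b then (dGconj n p x.1, dMconj φ n p x.1 x.2) else (dGdel n p x.1, dMmer n p x.2)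

set_option maxHeartbeats 2000000 in
theorem face_face (hφ : ∀ g : G, φ g ∈ Subgroup.center G) (n : ℕ) (a b : Bool)
    (i j : Fin (n + 1)) (hij : i ≤ j) (x : (Fin (n + 2) → G) × (Fin (n + 2) → M)) :
    face φ n a i (face φ (n + 1) b j.succ x) =
      face φ n b j (face φ (n + 1) a i.castSucc x) := by
  obtain ⟨g, m⟩ := x
  have hc : ∀ g h : G, φ g * h = h * φ g := fun g h => (Subgroup.mem_center_iff.1 (hφ g) h).symm
  have hconj : ∀ g h : G, φ (g⁻¹ * h * g) = φ h := by
    intro g h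
    rw [map_mul, map_mul, map_inv, mul_assoc, hc h, inv_mul_cancel_left]
  have hcc : ∀ g h : G, h * (h⁻¹ * g * h) = g * h := by
    intro g h
    group
  obtain ⟨i, hi⟩ := i
  obtain ⟨j, hj⟩ := j
  simp only [Fin.mk_le_mk] at hij
  have h1 : i < j + 1 := by omega
  have h2 : ¬ j < i := by omega
  cases a <;> cases b <;> simp only [face, Bool.false_eq_true, if_true, if_false] <;>
    refine Prod.ext ?_ ?_ <;> funext k <;> obtain ⟨k, hk⟩ := k <;>
    simp only [dGdel_apply, dGconj, dMmer, dMconj, Fin.succ_mk, Fin.castSucc_mk, h1, h2,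
      if_true, if_false] <;>
    split_ifs <;> first
      | omega
      | rfl
      | (simp only [ract_ract, ract_add, add_assoc, hconj]; done)
      | (simp only [ract_ract, ract_add, add_assoc, hconj, mul_assoc, mul_inv_cancel_left,
          mul_inv_rev, inv_mul_cancel_left]; done)
      | (simp only [ract_ract, ract_add, add_assoc, hconj, hc (g ⟨i, _⟩)]; done)
      | (simp only [ract_ract, ract_add, add_assoc, hconj, hc (g ⟨j + 1, _⟩)]; done)
      | (simp only [ract_ract, ract_add, add_assoc, hconj, hcc, hc (g ⟨i, _⟩)]; done)

theorem alt_sum_zero {B : Type*} [AddCommGroup B] (n : ℕ) (T : Fin (n + 2) → Fin (n + 1) → B)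
    (hT : ∀ i j : Fin (n + 1), i ≤ j → T j.succ i = T i.castSucc j) :
    ∑ q : Fin (n + 2), (-1 : ℤ) ^ (q : ℕ) • ∑ p : Fin (n + 1), (-1 : ℤ) ^ (p : ℕ) • T q p = 0 := by
  simp only [Finset.smul_sum, smul_smul, ← pow_add]
  rw [← Fintype.sum_prod_type'
    (f := fun (q : Fin (n + 2)) (p : Fin (n + 1)) => (-1 : ℤ) ^ ((q : ℕ) + p) • T q p)]
  refine Finset.sum_involution
    (fun x _ => if h : (x.1 : ℕ) ≤ x.2 then (x.2.succ, ⟨x.1, by omega⟩)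
      else (x.2.castSucc, ⟨(x.1 : ℕ) - 1, by omega⟩)) ?_ ?_ ?_ ?_
  · rintro ⟨⟨q, hq⟩, ⟨p, hp⟩⟩ -
    by_cases h : q ≤ p
    · have := hT ⟨q, by omega⟩ ⟨p, hp⟩ h
      simp only [Fin.succ_mk, Fin.castSucc_mk] at this
      simp only [h, dif_pos, Fin.succ_mk, this, ← add_smul]
      rw [show p + 1 + q = (q + p) + 1 by ring, pow_succ]
      simp
    · obtain ⟨q, rfl⟩ : ∃ r, q = r + 1 := ⟨q - 1, by omega⟩
      have := hT ⟨p, by omega⟩ ⟨q, by omega⟩ (by simp only [Fin.mk_le_mk]; omega)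
      simp only [Fin.succ_mk, Fin.castSucc_mk] at this
      simp only [h, dif_neg, not_false_eq_true, Fin.castSucc_mk, this, Nat.add_sub_cancel,
        ← add_smul]
      rw [show q + 1 + p = (p + q) + 1 by ring, pow_succ]
      simp
  · rintro ⟨⟨q, hq⟩, ⟨p, hp⟩⟩ - -
    by_cases h : q ≤ p
    · simp [h]; omega
    · simp [h]; omega
  · intros; simp
  · rintro ⟨⟨q, hq⟩, ⟨p, hp⟩⟩ -
    by_cases h : q ≤ p
    · have : ¬ (p + 1 ≤ q) := by omega
      simp [h, this]
    · have : p ≤ q - 1 := by omega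
      simp [h, this]; omega

theorem dBRU_of (n : ℕ) (x : (Fin (n + 1) → G) × (Fin (n + 1) → M)) :
    dBRU φ n (FreeAbelianGroup.of x) = ∑ p : Fin (n + 1), (-1 : ℤ) ^ (p : ℕ) •
        (FreeAbelianGroup.of (face φ n false p x) - FreeAbelianGroup.of (face φ n true p x)) := by
  simp [dBRU, face]

/-- `C^{BR_U}_*(X;ℤ)` is a chain complex:
`∂^{BR_U}_{n-1} ∘ ∂^{BR_U}_n = 0` for every `n` (the composites in degrees `≤ 1` vanish
trivially since the chain groups there are zero and the boundary maps are zero). -/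
theorem dBRU_comp_dBRU_eq_zero (hφ : ∀ g : G, φ g ∈ Subgroup.center G) :
    ∀ n : ℕ, (dBRU (M := M) φ n).comp (dBRU (M := M) φ (n + 1)) = 0 := by
  intro n
  refine FreeAbelianGroup.lift_ext _ _ fun x => ?_
  have key := alt_sum_zero n (fun q p =>
    (FreeAbelianGroup.of (face φ n false p (face φ (n + 1) false q x))
      - FreeAbelianGroup.of (face φ n true p (face φ (n + 1) false q x)))
    - (FreeAbelianGroup.of (face φ n false p (face φ (n + 1) true q x))
      - FreeAbelianGroup.of (face φ n true p (face φ (n + 1) true q x)))) (by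
    intro i j hij
    simp only [face_face φ hφ n _ _ i j hij]
    abel)
  rw [AddMonoidHom.comp_apply, dBRU_of, map_sum, AddMonoidHom.zero_apply, ← key]
  refine Finset.sum_congr rfl fun q _ => ?_
  rw [map_zsmul, map_sub, dBRU_of, dBRU_of, ← Finset.sum_sub_distrib]
  simp only [← smul_sub]

end GAlex
end

section
/- Let f : M² → A be a G-invariant A-multilinear map. Then the birack 2-cocycle Φ_f := f ∘ ψ₂ ∘ γ₂ : C^{BR}_2(X;ℤ) → A of the G-Alexander biquandle X satisfies Φ_f((m₁,g₁),(m₂,g₂)) = f(m₁ − m₂, m₂ − m₂·(φ(g₂)g₂⁻¹)) for all m₁,m₂ ∈ M and g₁,g₂ ∈ G. -/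
open FreeAbelianGroup
open scoped TensorProduct

namespace GAlex

variable {G M A : Type*} [Group G] [AddCommGroup M] [DistribMulAction Gᵐᵒᵖ M] [AddCommGroup A]

variable (φ : G →* G)

/-- The subgroup of `G`-coinvariants relations in `C^{gp}_n(M;ℤ)`:
generated by all `(m₁g,…,m_ng) − (m₁,…,m_n)`. -/
def coinvSub (n : ℕ) : AddSubgroup (FreeAbelianGroup (Fin n → M)) :=
  AddSubgroup.closure
    {z | ∃ (m : Fin n → M) (g : G),
        z = FreeAbelianGroup.of (fun i => ract (m i) g) - FreeAbelianGroup.of m}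

/-- The coinvariant group chain group `C^{gp}_n(M;ℤ)_G`. -/
abbrev CgpG (n : ℕ) : Type _ :=
  FreeAbelianGroup (Fin n → M) ⧸ coinvSub (G := G) (M := M) n

/-- The group-homology boundary map `∂^{gp}_{n+1} : C^{gp}_{n+1}(M;ℤ) → C^{gp}_n(M;ℤ)`
(it is `0` in degrees `≤ 1`, which agrees with this formula at `n = 0`). -/
def dgp (n : ℕ) :
    FreeAbelianGroup (Fin (n + 1) → M) →+ FreeAbelianGroup (Fin n → M) :=
  FreeAbelianGroup.lift fun m =>
    (∑ p : Fin (n + 1), (-1 : ℤ) ^ (p : ℕ) • FreeAbelianGroup.of (dMmer n p m)) +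
      (-1 : ℤ) ^ (n + 1) • FreeAbelianGroup.of fun j : Fin n => m j.castSucc

/-- `|k| = k₁ + ⋯ + k_n`. -/
def wt {n : ℕ} (k : Fin n → Bool) : ℕ := ∑ i, if k i then 1 else 0

/-- `g_{k,i} = φ(g₀^{k₀} ⋯ g_i^{k_i}) · g_{i+1}^{k_{i+1}} ⋯ g_{n-1}^{k_{n-1}}`
(indices written `0`-based; the products are ordered). -/
def gki {n : ℕ} (g : Fin n → G) (k : Fin n → Bool) (i : Fin n) : G :=
  φ ((((List.finRange n).filter fun j => decide (j ≤ i)).map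
        fun j => if k j then g j else 1).prod) *
    (((List.finRange n).filter fun j => decide (i < j)).map
        fun j => if k j then g j else 1).prod

/-- The value of `ψ` on a generator:
`Σ_{k, k₀ = 0} (−1)^{|k|} (m₀ g_{k,0}, …, m_n g_{k,n})`, as an element of the free
abelian group (before passing to coinvariants). -/
def psiVal (n : ℕ) (x : (Fin (n + 1) → G) × (Fin (n + 1) → M)) :
    FreeAbelianGroup (Fin (n + 1) → M) :=
  ∑ k ∈ Finset.univ.filter fun k : Fin (n + 1) → Bool => k 0 = false,
    (-1 : ℤ) ^ wt k • FreeAbelianGroup.of fun i => ract (x.2 i) (gki φ x.1 k i)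

/-- `ψ` as a homomorphism into the free abelian group (before coinvariants). -/
def psiFree (n : ℕ) :
    FreeAbelianGroup ((Fin (n + 1) → G) × (Fin (n + 1) → M)) →+
      FreeAbelianGroup (Fin (n + 1) → M) :=
  FreeAbelianGroup.lift (psiVal φ n)

/-- The homomorphism `ψ : C^{BR_U} → C^{gp}(M;ℤ)_G`. -/
def psiG (n : ℕ) :
    FreeAbelianGroup ((Fin (n + 1) → G) × (Fin (n + 1) → M)) →+
      CgpG (G := G) (M := M) (n + 1) :=
  (QuotientAddGroup.mk' (coinvSub (G := G) (M := M) (n + 1))).comp (psiFree φ n)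

/-- The homomorphism `ψ_{•,λ}`, sending a generator `x` to `ψ(x) ⊗ λ(x₁)` where `x₁` is the
first `G`-entry of `x`. -/
noncomputable def psiLam (lam : G → A) (n : ℕ) :
    FreeAbelianGroup ((Fin (n + 1) → G) × (Fin (n + 1) → M)) →+
      TensorProduct ℤ (CgpG (G := G) (M := M) (n + 1)) A :=
  FreeAbelianGroup.lift fun x =>
    (QuotientAddGroup.mk' (coinvSub (G := G) (M := M) (n + 1)) (psiVal φ n x)) ⊗ₜ[ℤ]
      lam (x.1 0)

/-- `D^{gp}_n(M;ℤ)_G`: the image in the coinvariants of the subgroup generated by tuples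
with a vanishing entry in a position `1 ≤ i ≤ n−1`. -/
def DgpGsub (n : ℕ) : AddSubgroup (CgpG (G := G) (M := M) n) :=
  (AddSubgroup.closure
      {z : FreeAbelianGroup (Fin n → M) |
        ∃ (m : Fin n → M) (i : Fin n),
          (i : ℕ) + 1 < n ∧ m i = 0 ∧ z = FreeAbelianGroup.of m}).map
    (QuotientAddGroup.mk' (coinvSub (G := G) (M := M) n))

/-- For a `G`-invariant `A`-multilinear map `f : M² → A`, the birack
`2`-cocycle `Φ_f = f ∘ ψ₂ ∘ γ₂` satisfies
`Φ_f((m₁,g₁),(m₂,g₂)) = f(m₁ − m₂, m₂ − m₂·(φ(g₂)g₂⁻¹))`.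
(The induced homomorphism `f : C^{gp}_2(M;ℤ)_G → A` is expressed through representatives,
so `f ∘ ψ₂` is computed as the free lift of `f` applied to `ψ₂^{free}`.) -/
theorem birack_two_cocycle_formula (hφ : ∀ g : G, φ g ∈ Subgroup.center G)
    (f : M → M → A)
    (hf₁ : ∀ m m' n : M, f (m + m') n = f m n + f m' n)
    (hf₂ : ∀ m n n' : M, f m (n + n') = f m n + f m n')
    (hfG : ∀ (m n : M) (g : G), f (ract m g) (ract n g) = f m n) :
    ∀ (m₁ m₂ : M) (g₁ g₂ : G),
      FreeAbelianGroup.lift (fun v : Fin 2 → M => f (v 0) (v 1))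
          (psiFree φ 1 (gammaMap 2 (FreeAbelianGroup.of ![(m₁, g₁), (m₂, g₂)]))) =
        f (m₁ - m₂) (m₂ - ract m₂ (φ g₂ * g₂⁻¹)) := by
  intro m₁ m₂ g₁ g₂
  have hract : ∀ (m : M) (a b : G), ract (ract m a) b = ract m (a * b) := by
    intro m a b
    simp [ract, smul_smul]
  have hone : ∀ m : M, ract m (1 : G) = m := by
    intro m
    simp [ract]
  have hsub : ∀ m n n' : M, f m (n - n') = f m n - f m n' := by
    intro m n n'
    rw [eq_sub_iff_add_eq, ← hf₂, sub_add_cancel]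
  have hset : (Finset.univ.filter fun k : Fin (1 + 1) → Bool => k 0 = false)
      = {![false, false], ![false, true]} := by decide
  have hne : (![false, false] : Fin (1 + 1) → Bool) ∉
      ({![false, true]} : Finset (Fin (1 + 1) → Bool)) := by decide
  have w0 : wt (![false, false] : Fin (1 + 1) → Bool) = 0 := by decide
  have w1 : wt (![false, true] : Fin (1 + 1) → Bool) = 1 := by decide
  have l1 : (List.finRange (1 + 1)).filter (fun j => decide (j ≤ 0)) = [0] := by decide
  have l2 : (List.finRange (1 + 1)).filter (fun j => decide (j ≤ 1)) = [0, 1] := by decide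
  have l3 : (List.finRange (1 + 1)).filter (fun j => decide (0 < j)) = [1] := by decide
  have l4 : (List.finRange (1 + 1)).filter (fun j => decide (1 < j)) = [] := by decide
  have a0 : ∀ g : Fin (1 + 1) → G, gki φ g ![false, false] 0 = 1 := by
    intro g; unfold gki; rw [l1, l3]; simp
  have a1 : ∀ g : Fin (1 + 1) → G, gki φ g ![false, false] 1 = 1 := by
    intro g; unfold gki; rw [l2, l4]; simp
  have b0 : ∀ g : Fin (1 + 1) → G, gki φ g ![false, true] 0 = g 1 := by
    intro g; unfold gki; rw [l1, l3]; simp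
  have b1 : ∀ g : Fin (1 + 1) → G, gki φ g ![false, true] 1 = φ (g 1) := by
    intro g; unfold gki; rw [l2, l4]; simp
  have key : f (ract (m₁ - m₂) g₂) (ract m₂ (φ g₂))
      = f (m₁ - m₂) (ract m₂ (φ g₂ * g₂⁻¹)) := by
    rw [← hfG _ _ g₂⁻¹, hract, hract, mul_inv_cancel, hone]
  rw [hsub, ← key]
  unfold gammaMap psiFree
  rw [FreeAbelianGroup.lift_apply_of, FreeAbelianGroup.lift_apply_of]
  unfold psiVal
  rw [hset, Finset.sum_insert hne, Finset.sum_singleton, w0, w1]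
  simp [a0, a1, b0, b1, hone, sub_eq_add_neg]

end GAlex
end

section
/- Let f : M³ → A be a G-invariant A-multilinear map. Then the birack 3-cocycle Φ_f := f ∘ ψ₃ ∘ γ₃ : C^{BR}_3(X;ℤ) → A of the G-Alexander biquandle X satisfies Φ_f((m₁,g₁),(m₂,g₂),(m₃,g₃)) = f((m₁−m₂) − (m₁−m₂)·(φ(g₂)⁻¹g₂), m₂ − m₃, m₃ − m₃·(φ(g₃)g₃⁻¹)) for all m₁,m₂,m₃ ∈ M and g₁,g₂,g₃ ∈ G. -/
open FreeAbelianGroup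
open scoped TensorProduct

namespace GAlex

variable {G M A : Type*} [Group G] [AddCommGroup M] [DistribMulAction Gᵐᵒᵖ M] [AddCommGroup A]

variable (φ : G →* G)

/-- For a `G`-invariant `A`-multilinear map `f : M³ → A`, the birack
`3`-cocycle `Φ_f = f ∘ ψ₃ ∘ γ₃` satisfies
`Φ_f((m₁,g₁),(m₂,g₂),(m₃,g₃)) =
  f((m₁−m₂) − (m₁−m₂)·(φ(g₂)⁻¹g₂), m₂ − m₃, m₃ − m₃·(φ(g₃)g₃⁻¹))`. -/
theorem birack_three_cocycle_formula (hφ : ∀ g : G, φ g ∈ Subgroup.center G)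
    (f : M → M → M → A)
    (hf₁ : ∀ m m' n p : M, f (m + m') n p = f m n p + f m' n p)
    (hf₂ : ∀ m n n' p : M, f m (n + n') p = f m n p + f m n' p)
    (hf₃ : ∀ m n p p' : M, f m n (p + p') = f m n p + f m n p')
    (hfG : ∀ (m n p : M) (g : G), f (ract m g) (ract n g) (ract p g) = f m n p) :
    ∀ (m₁ m₂ m₃ : M) (g₁ g₂ g₃ : G),
      FreeAbelianGroup.lift (fun v : Fin 3 → M => f (v 0) (v 1) (v 2))
          (psiFree φ 2
            (gammaMap 3 (FreeAbelianGroup.of ![(m₁, g₁), (m₂, g₂), (m₃, g₃)]))) =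
        f ((m₁ - m₂) - ract (m₁ - m₂) ((φ g₂)⁻¹ * g₂)) (m₂ - m₃)
          (m₃ - ract m₃ (φ g₃ * g₃⁻¹)) := by
  intro m₁ m₂ m₃ g₁ g₂ g₃
  have hn₁ : ∀ m n p : M, f (-m) n p = - f m n p := fun m n p =>
    (AddMonoidHom.mk' (fun m => f m n p) (fun a b => hf₁ a b n p)).map_neg m
  have hn₃ : ∀ m n p : M, f m n (-p) = - f m n p := fun m n p =>
    (AddMonoidHom.mk' (fun p => f m n p) (fun a b => hf₃ m n a b)).map_neg p
  have hs₁ : ∀ m m' n p : M, f (m - m') n p = f m n p - f m' n p := fun m m' n p => by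
    rw [sub_eq_add_neg, hf₁, hn₁, sub_eq_add_neg]
  have hs₃ : ∀ m n p p' : M, f m n (p - p') = f m n p - f m n p' := fun m n p p' => by
    rw [sub_eq_add_neg, hf₃, hn₃, sub_eq_add_neg]
  have hr : ∀ (m : M) (g h : G), ract (ract m g) h = ract m (g * h) := fun m g h => by
    simp [ract, mul_smul]
  have h1 : ∀ m : M, ract m (1 : G) = m := fun m => by simp [ract]
  have hc : ∀ g h : G, h * φ g = φ g * h := fun g h => Subgroup.mem_center_iff.1 (hφ g) h
  have key : ∀ (F : (Fin 3 → Bool) → A),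
      ∑ k ∈ Finset.univ.filter (fun k : Fin 3 → Bool => k 0 = false), F k
      = F ![false, false, false] + F ![false, true, false]
        + F ![false, false, true] + F ![false, true, true] := by
    intro F
    have : Finset.univ.filter (fun k : Fin 3 → Bool => k 0 = false)
      = {![false, false, false], ![false, true, false],
         ![false, false, true], ![false, true, true]} := by decide
    rw [this, Finset.sum_insert (by decide), Finset.sum_insert (by decide),
      Finset.sum_insert (by decide), Finset.sum_singleton]
    abel
  have hfr : List.finRange 3 = [0, 1, 2] := by decide
  generalize ha : m₁ - m₂ = a
  generalize hb : m₂ - m₃ = b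
  have e2 : f (ract a g₂) (ract b (φ g₂)) (ract m₃ (φ g₂))
      = f (ract a ((φ g₂)⁻¹ * g₂)) b m₃ := by
    rw [← hfG (ract a ((φ g₂)⁻¹ * g₂)) b m₃ (φ g₂), hr, mul_assoc, hc, inv_mul_cancel_left]
  have e3 : f (ract a g₃) (ract b g₃) (ract m₃ (φ g₃))
      = f a b (ract m₃ (φ g₃ * g₃⁻¹)) := by
    rw [← hfG a b (ract m₃ (φ g₃ * g₃⁻¹)) g₃, hr, inv_mul_cancel_right]
  have e4 : f (ract a (g₂ * g₃)) (ract b (φ g₂ * g₃)) (ract m₃ (φ g₂ * φ g₃))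
      = f (ract a ((φ g₂)⁻¹ * g₂)) b (ract m₃ (φ g₃ * g₃⁻¹)) := by
    rw [← hfG (ract a ((φ g₂)⁻¹ * g₂)) b (ract m₃ (φ g₃ * g₃⁻¹)) (φ g₂ * g₃), hr, hr]
    congr 2
    · rw [← mul_assoc, hc g₂ ((φ g₂)⁻¹ * g₂), mul_inv_cancel_left]
    · rw [← mul_assoc, hc g₂ (φ g₃ * g₃⁻¹), mul_assoc, mul_assoc, inv_mul_cancel, mul_one]
  simp only [gammaMap, psiFree, FreeAbelianGroup.lift_apply_of, psiVal, map_sum, map_zsmul]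
  rw [key]
  have w0 : wt ![false, false, false] = 0 := by decide
  have w1 : wt ![false, true, false] = 1 := by decide
  have w2 : wt ![false, false, true] = 1 := by decide
  have w3 : wt ![false, true, true] = 2 := by decide
  rw [w0, w1, w2, w3]
  simp [gki, hfr, h1, ha, hb, hs₁, hs₃]
  rw [e2, e3, e4]
  abel


end GAlex
end
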